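/- The scheme X_BH = {q₁ = q₂ = q₃ = 0} ⊂ ℙ⁵(ℂ) is a smooth complete intersection of three quadrics: for every nonzero point p ∈ ℂ⁶ with q₁(p) = q₂(p) = q₃(p) = 0, the 3×6 Jacobian matrix (∂qₖ/∂xⱼ(p))₁≤k≤3, 1≤j≤6 has rank 3. (Hence X_BH is a K3 surface.) -/

import Mathlib

open Matrix MvPolynomial

/-- The golden ratio `φ = (1+√5)/2`, viewed in `ℂ`. -/
noncomputable def phi : ℂ := (1 + Real.sqrt 5) / 2

/-- The three quadrics `q₁, q₂, q₃` in `ℂ[x₁,…,x₆]` cutting out the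
Brandhorst–Hashimoto K3 surface `X_BH ⊂ ℙ⁵(ℂ)`. -/
noncomputable def q : Fin 3 → MvPolynomial (Fin 6) ℂ :=
  ![X 0 ^ 2 + X 3 ^ 2 - C phi * X 4 ^ 2 + C phi * X 5 ^ 2,
    X 1 ^ 2 - C phi * X 3 ^ 2 + X 4 ^ 2 - C phi * X 5 ^ 2,
    X 2 ^ 2 + C phi * X 3 ^ 2 - C phi * X 4 ^ 2 + X 5 ^ 2]

lemma phi_sq : phi ^ 2 = phi + 1 := by
  have h : ((Real.sqrt 5 : ℝ) : ℂ) ^ 2 = 5 := by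
    rw [← Complex.ofReal_pow, Real.sq_sqrt (by norm_num)]; norm_num
  unfold phi
  linear_combination h / 4

/-- If every `p_j` or the value of `v` on column `j` vanishes, then `v` or `p` vanishes. -/
lemma key (f a b c x y z u v w : ℂ) (hf : f ^ 2 = f + 1)
    (e1 : x ^ 2 + u ^ 2 - f * v ^ 2 + f * w ^ 2 = 0)
    (e2 : y ^ 2 - f * u ^ 2 + v ^ 2 - f * w ^ 2 = 0)
    (e3 : z ^ 2 + f * u ^ 2 - f * v ^ 2 + w ^ 2 = 0)
    (h1 : a = 0 ∨ x = 0) (h2 : b = 0 ∨ y = 0) (h3 : c = 0 ∨ z = 0)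
    (h4 : a - f * b + f * c = 0 ∨ u = 0)
    (h5 : -f * a + b - f * c = 0 ∨ v = 0)
    (h6 : f * a - f * b + c = 0 ∨ w = 0) :
    (a = 0 ∧ b = 0 ∧ c = 0) ∨ (x = 0 ∧ y = 0 ∧ z = 0 ∧ u = 0 ∧ v = 0 ∧ w = 0) := by
  have hf0 : f ≠ 0 := by rintro rfl; norm_num at hf
  rcases h1 with h1 | h1 <;> rcases h2 with h2 | h2 <;> rcases h3 with h3 | h3 <;>
    rcases h4 with h4 | h4 <;> rcases h5 with h5 | h5 <;> rcases h6 with h6 | h6 <;>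
    first
    | (left; refine ⟨?_, ?_, ?_⟩ <;> grind)
    | (right; refine ⟨?_, ?_, ?_, ?_, ?_, ?_⟩ <;> grind)

/-- `X_BH = {q₁ = q₂ = q₃ = 0} ⊂ ℙ⁵(ℂ)` is a smooth complete intersection of three
quadrics: at every nonzero `p ∈ ℂ⁶` on which all the `qₖ` vanish, the `3×6` Jacobian
matrix `(∂qₖ/∂xⱼ(p))` has rank `3`. -/
theorem stmt_19 :
    ∀ p : Fin 6 → ℂ, p ≠ 0 → (∀ k : Fin 3, eval p (q k) = 0) →
      (Matrix.of fun (k : Fin 3) (j : Fin 6) => eval p (pderiv j (q k))).rank = 3 := by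
  intro p hp hq
  have hli : LinearIndependent ℂ
      (Matrix.of fun (k : Fin 3) (j : Fin 6) => eval p (pderiv j (q k))).row := by
    rw [Fintype.linearIndependent_iff]
    intro g hg
    have e1 := hq 0
    have e2 := hq 1
    have e3 := hq 2
    have H := fun j => congrFun hg j
    have h0 := H 0
    have h1 := H 1
    have h2 := H 2
    have h3 := H 3
    have h4 := H 4
    have h5 := H 5
    simp [q] at e1 e2 e3
    simp [q, Fin.sum_univ_three, Matrix.row, pderiv_X, Pi.single_apply] at h0 h1 h2 h3 h4 h5
    have k := key phi (g 0) (g 1) (g 2) (p 0) (p 1) (p 2) (p 3) (p 4) (p 5) phi_sq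
      e1 e2 e3 h0 h1 h2
      (mul_eq_zero.mp (by linear_combination h3 / 2))
      (mul_eq_zero.mp (by linear_combination h4 / 2))
      (mul_eq_zero.mp (by linear_combination h5 / 2))
    rcases k with ⟨a, b, c⟩ | ⟨a, b, c, d, e, f⟩
    · intro i
      fin_cases i <;> assumption
    · exfalso
      apply hp
      funext i
      fin_cases i <;> assumption
  simpa using hli.rank_matrix
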